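/- Let l ≥ 3 be an integer and let f, g be cusp forms of weight 4 for Γ₁(l). Then, for any choice of the lifting function γ(·,·), one has 0 = Σ_{(c,d) ∈ (ℤ/lℤ)², gcd(c,d,l)=1} [ ( ⟨g,(y−x)²(−d,c+d)⟩ − ⟨g,(y+x)²(d,d−c)⟩ )·⟨f,x²(c,d)⟩ − 2·( ⟨g,y(y−x)(−d,c+d)⟩ + ⟨g,y(y+x)(d,d−c)⟩ )·⟨f,xy(c,d)⟩ + ( ⟨g,y²(−d,c+d)⟩ − ⟨g,y²(d,d−c)⟩ )·⟨f,y²(c,d)⟩ ]. -/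

import Mathlib

open scoped BigOperators MatrixGroups
open UpperHalfPlane

namespace MW

/-- `gcd(u,v,l) = 1` for `u v : ZMod l`. -/
def copr (l : ℕ) (u v : ZMod l) : Prop :=
  Nat.gcd (Nat.gcd (ZMod.val u) (ZMod.val v)) l = 1

instance (l : ℕ) (u v : ZMod l) : Decidable (copr l u v) := by
  unfold copr; infer_instance

/-- The point `i·t` of the upper half-plane (junk value for `t ≤ 0`). -/
noncomputable def axisPt (t : ℝ) : ℍ :=
  ⟨Complex.I * Complex.ofReal (if 0 < t then t else 1), by
    split_ifs with h
    · simpa using h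
    · simp⟩

/-- The period integral `P_i(f,γ) = ∫_0^{i∞} f(γ·s)·(cs+d)^{−4}·s^i ds`,
parametrized by `s = i·t`, `t ∈ (0,∞)`. -/
noncomputable def pInt (f : ℍ → ℂ) (γ : SL(2, ℤ)) (i : ℕ) : ℂ :=
  ∫ t in Set.Ioi (0 : ℝ),
    f (γ • axisPt t) *
        (((γ : Matrix (Fin 2) (Fin 2) ℤ) 1 0 : ℂ) * (Complex.I * (t : ℂ)) +
          ((γ : Matrix (Fin 2) (Fin 2) ℤ) 1 1 : ℂ)) ^ (-4 : ℤ) *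
        (Complex.I * (t : ℂ)) ^ i * Complex.I

/-- The period pairing `⟨f, (p₂x² + p₁xy + p₀y²)(u,v)⟩` for a chosen lift `γ` of `(u,v)`. -/
noncomputable def pair (f : ℍ → ℂ) (γ : SL(2, ℤ)) (p2 p1 p0 : ℂ) : ℂ :=
  p2 * pInt f γ 2 + p1 * pInt f γ 1 + p0 * pInt f γ 0

/-- The `(c,d)` term of the Petersson formula. -/
noncomputable def petTerm (l : ℕ) (f g : ℍ → ℂ) (γfun : ZMod l × ZMod l → SL(2, ℤ))
    (conjugate : Bool) (p : ZMod l × ZMod l) : ℂ :=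
  let c := p.1
  let d := p.2
  let cj : ℂ → ℂ := fun z => if conjugate then (starRingEnd ℂ) z else z
  cj (pair g (γfun (-d, c + d)) 1 (-2) 1 - pair g (γfun (d, d - c)) 1 2 1) *
      pInt f (γfun (c, d)) 2 -
    2 * cj (pair g (γfun (-d, c + d)) 0 (-1) 1 + pair g (γfun (d, d - c)) 0 1 1) *
      pInt f (γfun (c, d)) 1 +
    cj (pair g (γfun (-d, c + d)) 0 0 1 - pair g (γfun (d, d - c)) 0 0 1) *
      pInt f (γfun (c, d)) 0

end MW

namespace MWaux

section Analysis
open Complex Filter Topology MeasureTheory Set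

/-- The upper half plane as a set. -/
def UU : Set ℂ := {z | 0 < z.im}

/-- Filter of neighbourhoods of `i∞` in the strip `|Re z| ≤ 1`. -/
def SF : Filter ℂ := comap Complex.im atTop ⊓ 𝓟 {z : ℂ | |z.re| ≤ 1}

lemma isOpen_UU : IsOpen UU := isOpen_lt continuous_const Complex.continuous_im

lemma convex_UU : Convex ℝ UU := convex_halfSpace_im_gt 0

lemma UU_ne {z : ℂ} (hz : z ∈ UU) : z ≠ 0 := by
  rintro rfl; simp [UU] at hz

lemma axis_mem {t : ℝ} (ht : 0 < t) : Complex.I * (t : ℂ) ∈ UU := by simp [UU, ht]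

lemma dl_mem (ε : ℝ) {z : ℂ} (hz : z ∈ UU) : (ε : ℂ) - 1 / z ∈ UU := by
  have h0 := UU_ne hz
  simp only [UU, mem_ofPred_eq, one_div, sub_im, ofReal_im, inv_im] at *
  have : 0 < normSq z := normSq_pos.2 h0
  rw [zero_sub, neg_div, neg_neg]
  positivity

lemma dl_axis (ε t : ℝ) : (ε : ℂ) - 1 / (Complex.I * (t : ℂ)) = ε + Complex.I * ((t⁻¹ : ℝ) : ℂ) := by
  push_cast
  rw [one_div, mul_inv, inv_I]; ring

lemma tendsto_axis_top (ε : ℝ) (hε : |ε| ≤ 1) :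
    Tendsto (fun t : ℝ => (ε : ℂ) + Complex.I * (t : ℂ)) atTop SF := by
  refine tendsto_inf.2 ⟨tendsto_comap_iff.2 ?_, tendsto_principal.2 ?_⟩
  · refine tendsto_id.congr fun t => ?_
    simp
  · refine Eventually.of_forall fun t => ?_
    simpa using hε

lemma tendsto_axis_top' : Tendsto (fun t : ℝ => Complex.I * (t : ℂ)) atTop SF := by
  simpa using tendsto_axis_top 0 (by simp)

lemma tendsto_axis_zero (ε : ℝ) (hε : |ε| ≤ 1) :
    Tendsto (fun t : ℝ => (ε : ℂ) - 1 / (Complex.I * (t : ℂ))) (𝓝[>] 0) SF := by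
  simp_rw [dl_axis]
  exact (tendsto_axis_top ε hε).comp tendsto_inv_nhdsGT_zero

lemma SF_im : Tendsto Complex.im SF atTop := tendsto_comap.mono_left inf_le_left

lemma SF_UU : ∀ᶠ z in SF, z ∈ UU := SF_im.eventually (eventually_gt_atTop 0)

lemma SF_re : ∀ᶠ z in SF, |z.re| ≤ 1 :=
  (tendsto_principal.1 (tendsto_id.mono_left inf_le_right) : _)

/-- Holomorphic on the upper half plane and rapidly decaying at `i∞`. -/
structure Nice (h : ℂ → ℂ) : Prop where
  diff : DifferentiableOn ℂ h UU
  decay : ∀ n : ℕ, Tendsto (fun z => h z * z ^ n) SF (𝓝 0)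

/-- Every holomorphic function on the upper half plane has a primitive. -/
lemma exists_prim {h : ℂ → ℂ} (hd : DifferentiableOn ℂ h UU) :
    ∃ Φ : ℂ → ℂ, ∀ z ∈ UU, HasDerivAt Φ (h z) z := by
  -- Cayley transform
  let c : ℂ → ℂ := fun w => Complex.I * (1 + w) / (1 - w)
  have hne : ∀ w ∈ Metric.ball (0 : ℂ) 1, (1 - w) ≠ 0 := by
    intro w hw h0
    have : w = 1 := by linear_combination -h0
    simp [this] at hw
  have hc : ∀ w ∈ Metric.ball (0 : ℂ) 1, HasDerivAt c (2 * Complex.I / (1 - w) ^ 2) w := by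
    intro w hw
    have h1 : HasDerivAt (fun w : ℂ => Complex.I * (1 + w)) Complex.I w := by
      simpa using ((hasDerivAt_id w).const_add 1).const_mul Complex.I
    have h2 : HasDerivAt (fun w : ℂ => 1 - w) (-1) w := by
      simpa using (hasDerivAt_id w).const_sub 1
    refine (h1.div h2 (hne w hw)).congr_deriv ?_
    congr 1; ring
  have hcU : ∀ w ∈ Metric.ball (0 : ℂ) 1, c w ∈ UU := by
    intro w hw
    have hn := hne w hw
    have h1 : normSq w < 1 := by
      rw [normSq_eq_norm_sq]
      have : ‖w‖ < 1 := by simpa using hw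
      nlinarith [norm_nonneg w]
    have h2 : 0 < normSq (1 - w) := normSq_pos.2 hn
    have h3 : (c w).im = (1 - normSq w) / normSq (1 - w) := by
      simp only [c, div_im, mul_im, mul_re, Complex.I_re, Complex.I_im, add_re, add_im, one_re, one_im,
        sub_re, sub_im, normSq_apply]
      ring
    change 0 < (c w).im
    rw [h3]
    exact div_pos (by linarith) h2
  have hd' : DifferentiableOn ℂ (fun w => h (c w) * (2 * Complex.I / (1 - w) ^ 2)) (Metric.ball 0 1) := by
    refine DifferentiableOn.mul ?_ ?_
    · exact hd.comp (fun w hw => (hc w hw).differentiableAt.differentiableWithinAt) hcU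
    · refine DifferentiableOn.div (by fun_prop) (by fun_prop) ?_
      intro w hw; exact pow_ne_zero _ (hne w hw)
  obtain ⟨Ψ, hΨ⟩ := hd'.isExactOn_ball
  let k : ℂ → ℂ := fun z => (z - Complex.I) / (z + Complex.I)
  refine ⟨fun z => Ψ (k z), fun z hz => ?_⟩
  have hz' : 0 < z.im := hz
  have hzI : z + Complex.I ≠ 0 := by
    intro h0
    have := congrArg Complex.im h0
    simp at this
    linarith
  have hk : k z ∈ Metric.ball (0 : ℂ) 1 := by
    simp only [k, Metric.mem_ball, dist_zero_right, norm_div]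
    rw [div_lt_one (norm_pos_iff.2 hzI)]
    rw [← sq_lt_sq₀ (norm_nonneg _) (norm_nonneg _), ← normSq_eq_norm_sq, ← normSq_eq_norm_sq]
    simp only [normSq_apply, sub_re, sub_im, add_re, add_im, Complex.I_re, Complex.I_im]
    nlinarith
  have hck : c (k z) = z := by
    have : 1 - k z ≠ 0 := hne _ hk
    simp only [c]
    rw [div_eq_iff this]
    simp only [k]
    field_simp
    ring_nf
  have hkd : HasDerivAt k (2 * Complex.I / (z + Complex.I) ^ 2) z := by
    have h1 : HasDerivAt (fun z : ℂ => z - Complex.I) 1 z := by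
      simpa using (hasDerivAt_id z).sub_const Complex.I
    have h2 : HasDerivAt (fun z : ℂ => z + Complex.I) 1 z := by
      simpa using (hasDerivAt_id z).add_const Complex.I
    refine (h1.div h2 hzI).congr_deriv ?_
    congr 1; ring
  refine ((hΨ _ hk).comp z hkd).congr_deriv ?_
  change h (c (k z)) * (2 * Complex.I / (1 - k z) ^ 2) * (2 * Complex.I / (z + Complex.I) ^ 2) = h z
  rw [hck]
  have h1k : 1 - k z = 2 * Complex.I / (z + Complex.I) := by
    simp only [k]; field_simp; ring
  rw [h1k]
  field_simp
  

/-- Fundamental theorem of calculus on `(0,∞)`. -/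
lemma ftc {φ φ' : ℝ → ℂ} (hd : ∀ t : ℝ, 0 < t → HasDerivAt φ (φ' t) t)
    (hi : IntegrableOn φ' (Ioi 0)) :
    ∃ a, Tendsto φ atTop (𝓝 a) ∧
      Tendsto φ (𝓝[>] 0) (𝓝 (a - ∫ t in Ioi (0 : ℝ), φ' t)) := by
  have htop := tendsto_limUnder_of_hasDerivAt_of_integrableOn_Ioi (fun x hx => hd x hx) hi
  refine ⟨_, htop, ?_⟩
  have key : ∀ s : ℝ, 0 < s → φ s = limUnder atTop φ - ∫ t in Ioi s, φ' t := by
    intro s hs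
    rw [integral_Ioi_of_hasDerivAt_of_tendsto' (f := φ) (m := limUnder atTop φ)
      (fun x hx => hd x (lt_of_lt_of_le hs hx)) (hi.mono_set (Ioi_subset_Ioi hs.le)) htop]
    ring
  have hlim : Tendsto (fun s => ∫ t in Ioi s, φ' t) (𝓝[>] 0) (𝓝 (∫ t in Ioi (0 : ℝ), φ' t)) := by
    have hcov : AECover (volume.restrict (Ioi (0 : ℝ))) (𝓝[>] (0 : ℝ)) (fun s => Ioi s) :=
      aecover_Ioi_of_Ioi (tendsto_id.mono_left nhdsWithin_le_nhds)
    have := hcov.integral_tendsto_of_countably_generated hi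
    refine this.congr' ?_
    filter_upwards [self_mem_nhdsWithin] with s hs
    rw [Measure.restrict_restrict measurableSet_Ioi]
    congr 2
    ext x
    simp only [mem_inter_iff, mem_Ioi] at *
    exact ⟨fun h => h.1, fun h => ⟨h, hs.trans h⟩⟩
  refine (hlim.const_sub _).congr' ?_
  filter_upwards [self_mem_nhdsWithin] with s hs
  exact (key s hs).symm

/-- A holomorphic function whose derivative tends to zero at `i∞` in the strip is
asymptotically constant there. -/
lemma strip_lim {Φ H : ℂ → ℂ} (hd : ∀ z ∈ UU, HasDerivAt Φ (H z) z)
    (hH : Tendsto H SF (𝓝 0)) {a : ℂ}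
    (ha : Tendsto (fun t : ℝ => Φ (Complex.I * t)) atTop (𝓝 a)) : Tendsto Φ SF (𝓝 a) := by
  have h1 : Tendsto (fun z : ℂ => Φ (Complex.I * (z.im : ℂ))) SF (𝓝 a) := ha.comp SF_im
  suffices h : Tendsto (fun z : ℂ => Φ z - Φ (Complex.I * (z.im : ℂ))) SF (𝓝 0) by
    simpa using h.add h1
  rw [Metric.tendsto_nhds] at hH ⊢
  intro e he
  have h2 := hH (e / 2) (by positivity)
  rw [SF, eventually_inf_principal, eventually_comap] at h2
  obtain ⟨Y, hY⟩ := eventually_atTop.1 h2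
  filter_upwards [SF_re, SF_UU, SF_im.eventually (eventually_ge_atTop Y)] with z hz hzU hzY
  have hzU' : 0 < z.im := hzU
  let S : Set ℂ := {w : ℂ | w.im = z.im ∧ |w.re| ≤ 1}
  have hS : Convex ℝ S := by
    intro u hu v hv p q hp hq hpq
    refine ⟨?_, ?_⟩
    · simp [hu.1, hv.1, ← add_mul, hpq]
    · have := (convex_Icc (-1 : ℝ) 1) (abs_le.1 hu.2) (abs_le.1 hv.2) hp hq hpq
      simpa [abs_le] using this
  have := hS.norm_image_sub_le_of_norm_hasDerivWithin_le (f := Φ) (f' := H) (C := e / 2)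
    (x := Complex.I * (z.im : ℂ)) (y := z)
    (fun w hw => (hd w (by change 0 < w.im; rw [hw.1]; exact hzU')).hasDerivWithinAt)
    (fun w hw => by simpa using (hY z.im hzY w hw.1 hw.2).le)
    (by simp [S]) ⟨rfl, hz⟩
  rw [dist_zero_right]
  have h3 : z - Complex.I * (z.im : ℂ) = (z.re : ℂ) := by
    apply Complex.ext <;> simp
  rw [h3, norm_real, Real.norm_eq_abs] at this
  nlinarith

lemma axis_deriv {Φ : ℂ → ℂ} {H : ℂ} {t : ℝ} (hd : HasDerivAt Φ H (Complex.I * t)) :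
    HasDerivAt (fun t : ℝ => Φ (Complex.I * t)) (H * Complex.I) t := by
  have h1 : HasDerivAt (fun w : ℂ => Complex.I * w) Complex.I (t : ℂ) := by
    simpa using (hasDerivAt_id (t : ℂ)).const_mul Complex.I
  exact (hd.comp (t : ℂ) h1).comp_ofReal

/-- Relation between a function and its slash translate. -/
structure Rel (ε : ℝ) (h0 h1 : ℂ → ℂ) : Prop where
  n0 : Nice h0
  n1 : Nice h1
  eps : |ε| ≤ 1
  rel : ∀ z ∈ UU, h1 z = h0 (ε - 1 / z) / z ^ 4

lemma cont_axis {P : ℂ → ℂ} (hP : ContinuousOn P UU) :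
    ContinuousOn (fun t : ℝ => P (Complex.I * t)) (Ioi 0) :=
  hP.comp (by fun_prop) (fun t ht => axis_mem ht)

lemma Rel.zero_lim {ε : ℝ} {h0 h1 : ℂ → ℂ} (R : Rel ε h0 h1) (n : ℕ) :
    Tendsto (fun t : ℝ => h1 (Complex.I * t) * (Complex.I * t) ^ n) (𝓝[>] 0) (𝓝 0) := by
  have h1' : Tendsto (fun t : ℝ => h1 (Complex.I * t)) (𝓝[>] 0) (𝓝 0) := by
    have h2 := (R.n0.decay 4).comp (tendsto_axis_zero ε R.eps)
    rw [tendsto_zero_iff_norm_tendsto_zero] at h2 ⊢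
    refine squeeze_zero' (Eventually.of_forall fun t => norm_nonneg _) ?_ h2
    filter_upwards [self_mem_nhdsWithin] with t ht
    have ht : 0 < t := ht
    rw [R.rel _ (axis_mem ht)]
    simp only [Function.comp_apply, norm_div, norm_mul, norm_pow]
    rw [div_eq_mul_inv]
    refine mul_le_mul_of_nonneg_left ?_ (norm_nonneg _)
    rw [← inv_pow]
    refine pow_le_pow_left₀ (by positivity) ?_ 4
    rw [dl_axis]
    refine le_trans ?_ (Complex.abs_im_le_norm _)
    simp [abs_of_pos ht]
  have h3 : Tendsto (fun t : ℝ => (Complex.I * (t : ℂ)) ^ n) (𝓝[>] 0) (𝓝 ((Complex.I * ((0 : ℝ) : ℂ)) ^ n)) := by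
    refine Tendsto.mono_left ?_ nhdsWithin_le_nhds
    exact Continuous.tendsto (by fun_prop) 0
  simpa using h1'.mul h3

lemma Rel.integrable {ε : ℝ} {h0 h1 : ℂ → ℂ} (R : Rel ε h0 h1) (n : ℕ) {P : ℂ → ℂ}
    (hP : ContinuousOn P UU) {a b : ℂ}
    (ha : Tendsto (fun t : ℝ => P (Complex.I * t)) atTop (𝓝 a))
    (hb : Tendsto (fun t : ℝ => P (Complex.I * t)) (𝓝[>] 0) (𝓝 b)) :
    IntegrableOn (fun t : ℝ => h1 (Complex.I * t) * (Complex.I * t) ^ n * P (Complex.I * t) * Complex.I) (Ioi 0) := by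
  have hc : ContinuousOn (fun t : ℝ => h1 (Complex.I * t) * (Complex.I * t) ^ n * P (Complex.I * t) * Complex.I) (Ioi 0) := by
    have h1c := cont_axis R.n1.diff.continuousOn
    have h2c := cont_axis hP
    have h3c : ContinuousOn (fun t : ℝ => (Complex.I * (t : ℂ)) ^ n) (Ioi 0) := by fun_prop
    exact ((h1c.mul h3c).mul h2c).mul continuousOn_const
  rw [integrableOn_Ioi_iff_integrableAtFilter_atTop_nhdsWithin]
  refine ⟨?_, ?_, hc.locallyIntegrableOn measurableSet_Ioi⟩
  · have hint : IntegrableAtFilter (fun t : ℝ => t ^ (-2 : ℝ)) atTop :=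
      ⟨Ioi 1, Ioi_mem_atTop 1, integrableOn_Ioi_rpow_of_lt (by norm_num) one_pos⟩
    refine Asymptotics.IsBigO.integrableAtFilter (g := fun t : ℝ => t ^ (-2 : ℝ)) ?_ ?_ hint
    · have h4 := (((R.n1.decay (n + 2)).comp tendsto_axis_top').mul ha).mul_const Complex.I
      have h5 := h4.isBigO_one ℝ
      have h6 : (fun t : ℝ => -((t ^ (-2 : ℝ) : ℝ) : ℂ)) =O[atTop]
          (fun t : ℝ => t ^ (-2 : ℝ)) := by
        refine Asymptotics.IsBigO.of_norm_left ?_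
        simp only [norm_neg, norm_real]
        exact (Asymptotics.isBigO_refl _ _).norm_left
      refine (h5.mul h6).congr' ?_ ?_
      · filter_upwards [eventually_gt_atTop 0] with t ht
        have ht' : (t : ℂ) ≠ 0 := by exact_mod_cast ht.ne'
        rw [Real.rpow_neg ht.le]
        simp only [Function.comp_apply, Real.rpow_ofNat, ofReal_inv, ofReal_pow, pow_add, mul_pow,
          Complex.I_sq]
        field_simp
      · exact Eventually.of_forall fun t => by simp
    · exact ⟨Ioi 0, Ioi_mem_atTop 0, hc.aestronglyMeasurable measurableSet_Ioi⟩
  · refine Measure.FiniteAtFilter.integrableAtFilter_of_tendsto (b := 0) ?_ ?_ ?_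
    · exact ⟨Ioi 0, self_mem_nhdsWithin, hc.aestronglyMeasurable measurableSet_Ioi⟩
    · exact (Measure.finiteAt_nhds volume (0 : ℝ)).filter_mono nhdsWithin_le_nhds
    · simpa using ((R.zero_lim n).mul hb).mul_const Complex.I

/-- The moments along the imaginary axis. -/
noncomputable def mom (h : ℂ → ℂ) (n : ℕ) : ℂ :=
  ∫ t in Ioi (0 : ℝ), h (Complex.I * t) * (Complex.I * t) ^ n * Complex.I

/-- Normalised primitives of `h z * z ^ n`. -/
def IsPrim (h : ℂ → ℂ) (n : ℕ) (p : ℂ → ℂ) : Prop :=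
  (∀ z ∈ UU, HasDerivAt p (h z * z ^ n) z) ∧ Tendsto p SF (𝓝 0)

lemma Rel.integrable' {ε : ℝ} {h0 h1 : ℂ → ℂ} (R : Rel ε h0 h1) (n : ℕ) :
    IntegrableOn (fun t : ℝ => h1 (Complex.I * t) * (Complex.I * t) ^ n * Complex.I) (Ioi 0) := by
  simpa using R.integrable n (P := fun _ => 1) continuousOn_const tendsto_const_nhds
    tendsto_const_nhds

lemma Rel.exists_isPrim {ε : ℝ} {h0 h1 : ℂ → ℂ} (R : Rel ε h0 h1) (n : ℕ) :
    ∃ p, IsPrim h1 n p := by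
  obtain ⟨Φ, hΦ⟩ := exists_prim (h := fun z => h1 z * z ^ n) (R.n1.diff.mul (by fun_prop))
  obtain ⟨a, ha, -⟩ := ftc (fun t ht => axis_deriv (hΦ _ (axis_mem ht))) (R.integrable' n)
  have := strip_lim hΦ (R.n1.decay n) ha
  refine ⟨fun z => Φ z - a, fun z hz => (hΦ z hz).sub_const a, ?_⟩
  simpa using this.sub_const a

open Classical in
/-- Choice of the normalised primitive. -/
noncomputable def prim (h : ℂ → ℂ) (n : ℕ) : ℂ → ℂ :=
  if H : ∃ p, IsPrim h n p then H.choose else 0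

lemma Rel.prim_spec {ε : ℝ} {h0 h1 : ℂ → ℂ} (R : Rel ε h0 h1) (n : ℕ) :
    IsPrim h1 n (prim h1 n) := by
  have H := R.exists_isPrim n
  rw [prim, dif_pos H]
  exact H.choose_spec

lemma Rel.prim_zero {ε : ℝ} {h0 h1 : ℂ → ℂ} (R : Rel ε h0 h1) (n : ℕ) :
    Tendsto (fun t : ℝ => prim h1 n (Complex.I * t)) (𝓝[>] 0) (𝓝 (-mom h1 n)) := by
  have hp := R.prim_spec n
  obtain ⟨a, ha, hb⟩ := ftc (fun t ht => axis_deriv (hp.1 _ (axis_mem ht))) (R.integrable' n)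
  have ha0 := tendsto_nhds_unique ha (hp.2.comp tendsto_axis_top')
  rw [ha0, zero_sub] at hb
  exact hb

/-- The Eichler integral based at `i∞`. -/
noncomputable def eich (h : ℂ → ℂ) (z : ℂ) : ℂ :=
  prim h 2 z - 2 * z * prim h 1 z + z ^ 2 * prim h 0 z

/-- The period polynomial. -/
noncomputable def perp (h : ℂ → ℂ) (z : ℂ) : ℂ :=
  mom h 2 - 2 * z * mom h 1 + z ^ 2 * mom h 0

lemma dl_deriv (ε : ℝ) {z : ℂ} (hz : z ∈ UU) :
    HasDerivAt (fun z : ℂ => (ε : ℂ) - 1 / z) (1 / z ^ 2) z := by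
  have := (hasDerivAt_inv (UU_ne hz)).const_sub (ε : ℂ)
  simpa using this

lemma const_of_deriv {D : ℂ → ℂ} (hD : ∀ z ∈ UU, HasDerivAt D 0 z) {z w : ℂ} (hz : z ∈ UU)
    (hw : w ∈ UU) : D z = D w :=
  isOpen_UU.is_const_of_deriv_eq_zero convex_UU.isPreconnected
    (fun z hz => (hD z hz).differentiableAt.differentiableWithinAt)
    (fun z hz => (hD z hz).deriv) hz hw

lemma eich_cocycle {ε ε' : ℝ} {h' h0 h1 : ℂ → ℂ} (R' : Rel ε' h' h0) (R : Rel ε h0 h1)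
    {z : ℂ} (hz : z ∈ UU) :
    eich h0 (ε - 1 / z) * z ^ 2 = eich h1 z + perp h1 z := by
  have hz0 := UU_ne hz
  set w : ℂ := ε - 1 / z with hw
  let D : ℂ → ℂ := fun u =>
    (prim h0 2 (ε - 1 / u) - 2 * w * prim h0 1 (ε - 1 / u) + w ^ 2 * prim h0 0 (ε - 1 / u)) * z ^ 2
      - (prim h1 2 u - 2 * z * prim h1 1 u + z ^ 2 * prim h1 0 u)
  have hD : ∀ u ∈ UU, HasDerivAt D 0 u := by
    intro u hu
    have hu0 := UU_ne hu
    have d (n : ℕ) := ((R'.prim_spec n).1 _ (dl_mem ε hu)).comp u (dl_deriv ε hu)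
    have e (n : ℕ) := (R.prim_spec n).1 u hu
    refine (((((d 2).sub ((d 1).const_mul (2 * w))).add ((d 0).const_mul (w ^ 2))).mul_const
      (z ^ 2)).sub (((e 2).sub ((e 1).const_mul (2 * z))).add
        ((e 0).const_mul (z ^ 2)))).congr_deriv ?_
    rw [R.rel u hu, hw]
    field_simp
    ring
  have hlim : Tendsto (fun t : ℝ => D (Complex.I * t)) (𝓝[>] 0) (𝓝 (perp h1 z)) := by
    have d (n : ℕ) := (R'.prim_spec n).2.comp (tendsto_axis_zero ε R.eps)
    have e (n : ℕ) := R.prim_zero n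
    have := (((((d 2).sub ((d 1).const_mul (2 * w))).add ((d 0).const_mul (w ^ 2))).mul_const
      (z ^ 2)).sub (((e 2).sub ((e 1).const_mul (2 * z))).add
        ((e 0).const_mul (z ^ 2))))
    refine this.congr' ?_ |>.trans (le_of_eq ?_)
    · exact Eventually.of_forall fun t => rfl
    · congr 1; simp only [perp]; ring
  have hconst : Tendsto (fun t : ℝ => D (Complex.I * t)) (𝓝[>] 0) (𝓝 (D z)) := by
    refine tendsto_const_nhds.congr' ?_
    filter_upwards [self_mem_nhdsWithin] with t ht
    exact const_of_deriv hD hz (axis_mem ht)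
  have := tendsto_nhds_unique hconst hlim
  rw [← this]
  simp only [D, eich, ← hw]
  ring

lemma dl_three {e z : ℂ} (he : e ^ 2 = 1) (hz0 : z ≠ 0) (hz1 : e - 1 / z ≠ 0)
    (hz2 : e - 1 / (e - 1 / z) ≠ 0) : e - 1 / (e - 1 / (e - 1 / z)) = z := by
  have h1 : e * z - 1 ≠ 0 := by
    intro h
    apply hz1
    field_simp
    rw [h, mul_zero]
  have h2 : e - 1 / z = (e * z - 1) / z := by field_simp
  have he0 : e ≠ 0 := by rintro rfl; simp at he
  have h3 : e - 1 / (e - 1 / z) = -e / (e * z - 1) := by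
    rw [h2]; field_simp
    linear_combination z * he
  rw [h3]
  field_simp
  linear_combination he

/-- Cauchy's theorem on an ideal triangle. -/
lemma triangle {ε : ℝ} (hε : ε ^ 2 = 1) {H0 H1 H2 : ℂ → ℂ}
    (hd : DifferentiableOn ℂ H0 UU)
    (r1 : ∀ z ∈ UU, H1 z = H0 (ε - 1 / z) / z ^ 2)
    (r2 : ∀ z ∈ UU, H2 z = H1 (ε - 1 / z) / z ^ 2)
    (t0 : Tendsto H0 SF (𝓝 0)) (t1 : Tendsto H1 SF (𝓝 0)) (t2 : Tendsto H2 SF (𝓝 0))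
    (i0 : IntegrableOn (fun t : ℝ => H0 (Complex.I * t) * Complex.I) (Ioi 0))
    (i1 : IntegrableOn (fun t : ℝ => H1 (Complex.I * t) * Complex.I) (Ioi 0))
    (i2 : IntegrableOn (fun t : ℝ => H2 (Complex.I * t) * Complex.I) (Ioi 0)) :
    (∫ t in Ioi (0 : ℝ), H0 (Complex.I * t) * Complex.I) +
      (∫ t in Ioi (0 : ℝ), H1 (Complex.I * t) * Complex.I) +
      (∫ t in Ioi (0 : ℝ), H2 (Complex.I * t) * Complex.I) = 0 := by
  have heps : |ε| ≤ 1 := by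
    rw [← sq_le_one_iff_abs_le_one, hε]
  obtain ⟨Φ, hΦ⟩ := exists_prim hd
  have step : ∀ {Φ H H' : ℂ → ℂ}, (∀ z ∈ UU, HasDerivAt Φ (H z) z) →
      (∀ z ∈ UU, H' z = H (ε - 1 / z) / z ^ 2) →
      ∀ z ∈ UU, HasDerivAt (fun z => Φ (ε - 1 / z)) (H' z) z := by
    intro Φ H H' h1 h2 z hz
    refine ((h1 _ (dl_mem ε hz)).comp z (dl_deriv ε hz)).congr_deriv ?_
    rw [h2 z hz]; ring
  have hΦ1 := step hΦ r1
  have hΦ2 := step hΦ1 r2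
  obtain ⟨a0, ha0, hb0⟩ := ftc (fun t ht => axis_deriv (hΦ _ (axis_mem ht))) i0
  obtain ⟨a1, ha1, hb1⟩ := ftc (fun t ht => axis_deriv (hΦ1 _ (axis_mem ht))) i1
  obtain ⟨a2, ha2, hb2⟩ := ftc (fun t ht => axis_deriv (hΦ2 _ (axis_mem ht))) i2
  have s0 := (strip_lim hΦ t0 ha0).comp (tendsto_axis_zero ε heps)
  have s1 := (strip_lim hΦ1 t1 ha1).comp (tendsto_axis_zero ε heps)
  have s2 := (strip_lim hΦ2 t2 ha2).comp (tendsto_axis_zero ε heps)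
  have e1 := tendsto_nhds_unique s0 hb1
  have e2 := tendsto_nhds_unique s1 hb2
  have e0 : a2 = a0 - ∫ t in Ioi (0 : ℝ), H0 (Complex.I * t) * Complex.I := by
    refine tendsto_nhds_unique s2 (hb0.congr' ?_)
    filter_upwards [self_mem_nhdsWithin] with t ht
    have hz := axis_mem ht
    simp only [Function.comp_apply]
    generalize Complex.I * (t : ℂ) = z at hz ⊢
    congr 1
    have hz0 := UU_ne hz
    have hz1 := UU_ne (dl_mem ε hz)
    have hz2 := UU_ne (dl_mem ε (dl_mem ε hz))
    have hεc : (ε : ℂ) ^ 2 = 1 := by exact_mod_cast hε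
    exact (dl_three hεc hz0 hz1 hz2).symm
  linear_combination e0 + e1 + e2

/-- The bilinear Eichler-type integral. -/
noncomputable def bb (f g : ℂ → ℂ) : ℂ :=
  ∫ t in Ioi (0 : ℝ), f (Complex.I * t) * eich g (Complex.I * t) * Complex.I

lemma form_lim {f g : ℂ → ℂ} {ε ε' : ℝ} {f' g' : ℂ → ℂ} (Rf : Rel ε f' f) (Rg : Rel ε' g' g)
    (c0 c1 c2 : ℂ) :
    Tendsto (fun z => f z * (eich g z + (c0 + c1 * z + c2 * z ^ 2))) SF (𝓝 0) := by
  have d (n : ℕ) := Rf.n1.decay n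
  have p (n : ℕ) := (Rg.prim_spec n).2
  have := ((((d 0).mul (p 2)).sub (((d 1).mul (p 1)).const_mul 2)).add ((d 2).mul (p 0))).add
    ((((d 0).mul_const c0).add ((d 1).mul_const c1)).add ((d 2).mul_const c2))
  refine (this.congr fun z => ?_).trans (le_of_eq (by simp))
  simp only [eich]; ring

lemma form_int {f g : ℂ → ℂ} {ε ε' : ℝ} {f' g' : ℂ → ℂ} (Rf : Rel ε f' f) (Rg : Rel ε' g' g)
    (c0 c1 c2 : ℂ) :
    IntegrableOn (fun t : ℝ => f (Complex.I * t) * (eich g (Complex.I * t) +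
      (c0 + c1 * (Complex.I * t) + c2 * (Complex.I * t) ^ 2)) * Complex.I) (Ioi 0) ∧
    ∫ t in Ioi (0 : ℝ), f (Complex.I * t) * (eich g (Complex.I * t) +
      (c0 + c1 * (Complex.I * t) + c2 * (Complex.I * t) ^ 2)) * Complex.I =
      bb f g + (c0 * mom f 0 + c1 * mom f 1 + c2 * mom f 2) := by
  have q (n k : ℕ) := Rf.integrable n (P := prim g k)
    (fun z hz => ((Rg.prim_spec k).1 z hz).continuousAt.continuousWithinAt)
    ((Rg.prim_spec k).2.comp tendsto_axis_top') (Rg.prim_zero k)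
  have m (n : ℕ) := Rf.integrable' n
  have A : IntegrableOn (fun t : ℝ => f (Complex.I * t) * eich g (Complex.I * t) * Complex.I)
      (Ioi 0) := by
    refine (((q 0 2).sub ((q 1 1).const_mul 2)).add (q 2 0)).congr (Eventually.of_forall fun t => ?_)
    simp only [eich, Pi.add_apply, Pi.sub_apply]; ring
  have B : IntegrableOn (fun t : ℝ =>
      c0 * (f (Complex.I * t) * (Complex.I * t) ^ 0 * Complex.I) +
      c1 * (f (Complex.I * t) * (Complex.I * t) ^ 1 * Complex.I)) (Ioi 0) :=
    ((m 0).const_mul c0).add ((m 1).const_mul c1)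
  have C : IntegrableOn (fun t : ℝ =>
      c0 * (f (Complex.I * t) * (Complex.I * t) ^ 0 * Complex.I) +
      c1 * (f (Complex.I * t) * (Complex.I * t) ^ 1 * Complex.I) +
      c2 * (f (Complex.I * t) * (Complex.I * t) ^ 2 * Complex.I)) (Ioi 0) :=
    B.add ((m 2).const_mul c2)
  have E : (fun t : ℝ => f (Complex.I * t) * (eich g (Complex.I * t) +
      (c0 + c1 * (Complex.I * t) + c2 * (Complex.I * t) ^ 2)) * Complex.I) = fun t : ℝ =>
      f (Complex.I * t) * eich g (Complex.I * t) * Complex.I +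
      (c0 * (f (Complex.I * t) * (Complex.I * t) ^ 0 * Complex.I) +
      c1 * (f (Complex.I * t) * (Complex.I * t) ^ 1 * Complex.I) +
      c2 * (f (Complex.I * t) * (Complex.I * t) ^ 2 * Complex.I)) := by
    funext t; ring
  rw [E]
  refine ⟨A.add C, ?_⟩
  rw [integral_add A C, integral_add B ((m 2).const_mul c2),
    integral_add ((m 0).const_mul c0) ((m 1).const_mul c1)]
  simp only [integral_const_mul]
  rfl

/-- Contribution of the period polynomials, first kind. -/
noncomputable def ell (f g : ℂ → ℂ) : ℂ :=
  mom g 2 * mom f 0 - 2 * mom g 1 * mom f 1 + mom g 0 * mom f 2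

/-- Contribution of the period polynomials, second kind. -/
noncomputable def emm (ε : ℝ) (f g : ℂ → ℂ) : ℂ :=
  mom f 2 * (mom g 2 - 2 * ε * mom g 1 + mom g 0) + mom f 1 * (2 * mom g 1 - 2 * ε * mom g 0) +
    mom f 0 * mom g 0

lemma forms_triangle {ε : ℝ} (hε : ε ^ 2 = 1) {f0 f1 f2 g0 g1 g2 : ℂ → ℂ}
    (F0 : Rel ε f2 f0) (F1 : Rel ε f0 f1) (F2 : Rel ε f1 f2)
    (G0 : Rel ε g2 g0) (G1 : Rel ε g0 g1) (G2 : Rel ε g1 g2) :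
    bb f0 g0 + bb f1 g1 + bb f2 g2 + ell f1 g1 + ell f2 g2 + emm ε f2 g1 = 0 := by
  have hεc : (ε : ℂ) ^ 2 = 1 := by exact_mod_cast hε
  have I0 := form_int F0 G0 0 0 0
  have I1 := form_int F1 G1 (mom g1 2) (-2 * mom g1 1) (mom g1 0)
  have I2 := form_int F2 G2 (mom g2 2 + mom g1 0) (-2 * mom g2 1 + (2 * mom g1 1 - 2 * ε * mom g1 0))
    (mom g2 0 + (mom g1 2 - 2 * ε * mom g1 1 + mom g1 0))
  have key := triangle hε (H0 := fun z => f0 z * (eich g0 z + (0 + 0 * z + 0 * z ^ 2)))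
    ?_ ?_ ?_ (form_lim F0 G0 0 0 0)
    (form_lim F1 G1 (mom g1 2) (-2 * mom g1 1) (mom g1 0))
    (form_lim F2 G2 (mom g2 2 + mom g1 0) (-2 * mom g2 1 + (2 * mom g1 1 - 2 * ε * mom g1 0))
    (mom g2 0 + (mom g1 2 - 2 * ε * mom g1 1 + mom g1 0))) I0.1 I1.1 I2.1
  · rw [I0.2, I1.2, I2.2] at key
    simp only [ell, emm]
    linear_combination key
  · have d (n : ℕ) : DifferentiableOn ℂ (prim g0 n) UU := fun z hz =>
      ((G0.prim_spec n).1 z hz).differentiableAt.differentiableWithinAt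
    have := d 0
    have := d 1
    have := d 2
    have := F0.n1.diff
    simp only [eich]
    fun_prop
  · intro z hz
    have hz0 := UU_ne hz
    have := eich_cocycle G0 G1 hz
    rw [F1.rel z hz]
    simp only [perp] at this
    have hw : (ε - 1 / z) * z = ε * z - 1 := by field_simp
    generalize (ε : ℂ) - 1 / z = w at this hw ⊢
    field_simp
    linear_combination (-f0 w) * this
  · intro z hz
    have hz0 := UU_ne hz
    have := eich_cocycle G1 G2 hz
    rw [F2.rel z hz]
    simp only [perp] at this
    have hw : (ε - 1 / z) * z = ε * z - 1 := by field_simp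
    generalize (ε : ℂ) - 1 / z = w at this hw ⊢
    field_simp
    linear_combination (-f1 w) * this + f1 w * (2 * mom g1 1 * z - mom g1 0 * (w * z + ε * z - 1)) * hw
       - f1 w * mom g1 0 * z ^ 2 * hεc

end Analysis

end MWaux

namespace MWaux

section Modular
open Complex Filter Topology MeasureTheory Set
open ModularForm
open scoped Manifold

variable {l : ℕ}

/-- Bottom row mod `l`. -/
def brow (l : ℕ) (γ : SL(2, ℤ)) : ZMod l × ZMod l :=
  (((γ : Matrix (Fin 2) (Fin 2) ℤ) 1 0 : ZMod l), ((γ : Matrix (Fin 2) (Fin 2) ℤ) 1 1 : ZMod l))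

lemma coset_mem {γ γ' : SL(2, ℤ)} (h : brow l γ = brow l γ') :
    γ * γ'⁻¹ ∈ CongruenceSubgroup.Gamma1 l := by
  have h1 := congrArg Prod.fst h
  have h2 := congrArg Prod.snd h
  simp only [brow] at h1 h2
  have d := γ.det_coe
  have d' := γ'.det_coe
  rw [Matrix.det_fin_two] at d d'
  have D : ((γ 0 0 : ℤ) : ZMod l) * (γ 1 1 : ℤ) - (γ 0 1 : ℤ) * (γ 1 0 : ℤ) = 1 := by
    exact_mod_cast congrArg (Int.cast : ℤ → ZMod l) d
  have D' : ((γ' 0 0 : ℤ) : ZMod l) * (γ' 1 1 : ℤ) - (γ' 0 1 : ℤ) * (γ' 1 0 : ℤ) = 1 := by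
    exact_mod_cast congrArg (Int.cast : ℤ → ZMod l) d'
  rw [CongruenceSubgroup.Gamma1_mem]
  simp only [Matrix.SpecialLinearGroup.coe_mul, Matrix.SpecialLinearGroup.coe_inv,
    Matrix.adjugate_fin_two, Matrix.mul_apply, Fin.sum_univ_two]
  simp only [Matrix.of_apply, Matrix.cons_val', Matrix.cons_val_zero, Matrix.cons_val_one,
    Matrix.cons_val_fin_one]
  push_cast
  refine ⟨?_, ?_, ?_⟩
  · rw [← h1, ← h2]; linear_combination D
  · rw [h1, h2]; linear_combination D'
  · rw [h1, h2]; ring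

/-- Slash translates as functions on `ℂ`. -/
noncomputable def FF (f : CuspForm (CongruenceSubgroup.Gamma1 l) 4) (γ : SL(2, ℤ)) : ℂ → ℂ :=
  ((⇑f) ∣[(4 : ℤ)] γ) ∘ ofComplex

lemma slash_coset (f : CuspForm (CongruenceSubgroup.Gamma1 l) 4) {γ γ' : SL(2, ℤ)}
    (h : brow l γ = brow l γ') : (⇑f) ∣[(4 : ℤ)] γ = (⇑f) ∣[(4 : ℤ)] γ' := by
  have hm := coset_mem h
  have h1 : (⇑f) ∣[(4 : ℤ)] (γ * γ'⁻¹) = ⇑f :=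
    SlashInvariantFormClass.slash_action_eq f _ (Subgroup.mem_map_of_mem _ hm)
  have : γ = (γ * γ'⁻¹) * γ' := by group
  rw [this, SlashAction.slash_mul, h1]

lemma FF_coset (f : CuspForm (CongruenceSubgroup.Gamma1 l) 4) {γ γ' : SL(2, ℤ)}
    (h : brow l γ = brow l γ') : FF f γ = FF f γ' := by
  rw [FF, slash_coset f h, FF]

lemma FF_periodic (f : CuspForm (CongruenceSubgroup.Gamma1 l) 4) (γ : SL(2, ℤ)) :
    Function.Periodic (((⇑f) ∣[(4 : ℤ)] γ) ∘ ofComplex) (l : ℝ) := by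
  have hT : (⇑f) ∣[(4 : ℤ)] (γ * ModularGroup.T ^ (l : ℤ)) = (⇑f) ∣[(4 : ℤ)] γ := by
    apply slash_coset
    simp only [brow, Matrix.SpecialLinearGroup.coe_mul, ModularGroup.coe_T_zpow, Matrix.mul_apply,
      Fin.sum_univ_two]
    simp
  intro z
  simp only [Function.comp_apply]
  by_cases hz : 0 < z.im
  · lift z to ℍ using hz
    have h1 := congrFun hT z
    rw [SlashAction.slash_mul, ModularForm.SL_slash_apply] at h1
    have h2 : ofComplex ((z : ℂ) + ((l : ℝ) : ℂ)) = ModularGroup.T ^ (l : ℤ) • z := by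
      apply UpperHalfPlane.ext
      rw [ModularGroup.coe_T_zpow_smul_eq, ofComplex_apply_of_im_pos (by simpa using z.im_pos)]
      simp
    rw [h2, ofComplex_apply, ← h1]
    have h3 : denom (ModularGroup.T ^ (l : ℤ) : SL(2, ℤ)) z = 1 := by
      rw [ModularGroup.denom_apply, ModularGroup.coe_T_zpow]
      simp
    rw [h3]
    simp
  · rw [ofComplex_apply_of_im_nonpos (by simpa using hz),
      ofComplex_apply_of_im_nonpos (by simpa using hz)]

lemma FF_nice [NeZero l] (f : CuspForm (CongruenceSubgroup.Gamma1 l) 4) (γ : SL(2, ℤ)) : Nice (FF f γ) := by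
  have hmd : MDiff ((⇑f) ∣[(4 : ℤ)] γ) := (CuspFormClass.holo f).slash 4 γ
  refine ⟨UpperHalfPlane.mdifferentiable_iff.1 hmd, fun n => ?_⟩
  have hz := CuspFormClass.zero_at_infty_slash f γ
  have hb := ModularFormClass.bdd_at_infty_slash f γ
  have hl : (0 : ℝ) < l := by exact_mod_cast NeZero.pos l
  have hE := hz.exp_decay_atImInfty hl (FF_periodic f γ) hmd hb
  have h1 : Tendsto ofComplex SF atImInfty :=
    tendsto_comap_im_ofComplex.mono_left inf_le_left
  have h2 := hE.comp_tendsto h1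
  have h3 : (fun z : ℂ => z ^ n) =O[SF] (fun z : ℂ => z.im ^ n) := by
    refine Asymptotics.IsBigO.pow ?_ n
    refine Asymptotics.IsBigO.of_bound 2 ?_
    filter_upwards [SF_re, SF_im.eventually (eventually_ge_atTop 1)] with z hz hz1
    have := Complex.norm_le_abs_re_add_abs_im z
    rw [Real.norm_eq_abs]
    have := le_abs_self z.im
    linarith
  refine (h2.mul h3).trans_tendsto ?_
  have h4 : Tendsto (fun y : ℝ => Real.exp (-(2 * Real.pi / l) * y) * y ^ n) atTop (𝓝 0) := by
    have := tendsto_rpow_mul_exp_neg_mul_atTop_nhds_zero n (2 * Real.pi / l) (by positivity)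
    refine this.congr fun y => ?_
    rw [Real.rpow_natCast, mul_comm]
  refine (h4.comp SF_im).congr' ?_
  filter_upwards [SF_UU] with z hz
  have hz : 0 < z.im := hz
  simp only [Function.comp_apply]
  lift z to ℍ using hz
  rw [ofComplex_apply]
  congr 2
  rw [UpperHalfPlane.coe_im]
  ring

lemma FF_apply (f : CuspForm (CongruenceSubgroup.Gamma1 l) 4) (γ : SL(2, ℤ)) (z : ℍ) :
    FF f γ z = f (γ • z) * (((γ : Matrix (Fin 2) (Fin 2) ℤ) 1 0 : ℂ) * (z : ℂ) +
          ((γ : Matrix (Fin 2) (Fin 2) ℤ) 1 1 : ℂ)) ^ (-4 : ℤ) := by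
  simp [FF, ModularForm.SL_slash_apply, denom]

lemma pInt_eq (f : CuspForm (CongruenceSubgroup.Gamma1 l) 4) (γ : SL(2, ℤ)) (i : ℕ) :
    MW.pInt f γ i = mom (FF f γ) i := by
  refine setIntegral_congr_fun measurableSet_Ioi fun t ht => ?_
  have ht : 0 < t := ht
  have h : ((MW.axisPt t : ℍ) : ℂ) = Complex.I * t := by simp [MW.axisPt, ht]
  change _ = FF f γ (Complex.I * t) * (Complex.I * t) ^ i * Complex.I
  rw [← h, FF_apply]

/-- The order three (mod sign) elements. -/
def dlt (e : ℤˣ) : SL(2, ℤ) := ⟨!![1, -e; e, 0], by simp [Matrix.det_fin_two, ← Units.val_mul]⟩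

lemma dlt_rel [NeZero l] (f : CuspForm (CongruenceSubgroup.Gamma1 l) 4) (γ : SL(2, ℤ)) (e : ℤˣ) :
    Rel ((e : ℤ) : ℝ) (FF f γ) (FF f (γ * dlt e)) := by
  refine ⟨FF_nice f _, FF_nice f _, ?_, ?_⟩
  · rcases Int.units_eq_one_or e with rfl | rfl <;> simp
  · intro z hz
    have hz' : 0 < z.im := hz
    lift z to ℍ using hz'
    have h2 : ((dlt e • z : ℍ) : ℂ) = ((e : ℤ) : ℝ) - 1 / (z : ℂ) := by
      have hz0 := UU_ne hz
      rw [UpperHalfPlane.coe_specialLinearGroup_apply]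
      rcases Int.units_eq_one_or e with rfl | rfl
      · simp [dlt]; field_simp; ring
      · simp [dlt]; field_simp; ring
    rw [← h2]
    simp only [FF, Function.comp_apply, ofComplex_apply, SlashAction.slash_mul]
    rw [ModularForm.SL_slash_apply, ModularGroup.denom_apply]
    rcases Int.units_eq_one_or e with rfl | rfl
    · simp [dlt, div_eq_mul_inv]
    · simp [dlt, div_eq_mul_inv]; left; ring

lemma FF_neg (f : CuspForm (CongruenceSubgroup.Gamma1 l) 4) (γ : SL(2, ℤ)) :
    FF f (-γ) = FF f γ := by
  unfold FF
  congr 1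
  ext z
  rw [ModularForm.SL_slash_apply, ModularForm.SL_slash_apply, ModularGroup.SL_neg_smul,
    ModularGroup.denom_apply, ModularGroup.denom_apply]
  congr 1
  simp only [Matrix.SpecialLinearGroup.coe_neg, Matrix.neg_apply, Int.cast_neg]
  rw [show -((γ 1 0 : ℤ) : ℂ) * (z : ℂ) + -((γ 1 1 : ℤ) : ℂ) =
    -(((γ 1 0 : ℤ) : ℂ) * (z : ℂ) + ((γ 1 1 : ℤ) : ℂ)) by ring]
  exact Even.neg_zpow (by decide) _

lemma dlt_cube (e : ℤˣ) : dlt e * dlt e * dlt e = -1 := by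
  rcases Int.units_eq_one_or e with rfl | rfl <;> decide

lemma forms_sl [NeZero l] (f g : CuspForm (CongruenceSubgroup.Gamma1 l) 4) (γ : SL(2, ℤ))
    (e : ℤˣ) :
    bb (FF f (γ * (dlt e)⁻¹ * (dlt e)⁻¹)) (FF g (γ * (dlt e)⁻¹ * (dlt e)⁻¹)) +
      bb (FF f (γ * (dlt e)⁻¹)) (FF g (γ * (dlt e)⁻¹)) + bb (FF f γ) (FF g γ) +
      ell (FF f (γ * (dlt e)⁻¹)) (FF g (γ * (dlt e)⁻¹)) + ell (FF f γ) (FF g γ) +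
      emm ((e : ℤ) : ℝ) (FF f γ) (FF g (γ * (dlt e)⁻¹)) = 0 := by
  have h0 : γ * dlt e = -(γ * (dlt e)⁻¹ * (dlt e)⁻¹) := by
    have : dlt e = -((dlt e)⁻¹ * (dlt e)⁻¹) := by
      have h := dlt_cube e
      have : dlt e = dlt e * dlt e * dlt e * ((dlt e)⁻¹ * (dlt e)⁻¹) := by group
      rw [h] at this
      simpa using this
    conv_lhs => rw [this]
    simp [mul_assoc]
  have R0 (f : CuspForm (CongruenceSubgroup.Gamma1 l) 4) :
      Rel ((e : ℤ) : ℝ) (FF f γ) (FF f (γ * (dlt e)⁻¹ * (dlt e)⁻¹)) := by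
    have := dlt_rel f γ e
    rwa [h0, FF_neg] at this
  have R (f : CuspForm (CongruenceSubgroup.Gamma1 l) 4) (γ : SL(2, ℤ)) :
      Rel ((e : ℤ) : ℝ) (FF f (γ * (dlt e)⁻¹)) (FF f γ) := by
    have := dlt_rel f (γ * (dlt e)⁻¹) e
    rwa [inv_mul_cancel_right] at this
  refine forms_triangle ?_ (R0 f) (R f _) (R f _) (R0 g) (R g _) (R g _)
  rcases Int.units_eq_one_or e with rfl | rfl <;> simp

/-- Action of `(dlt e)⁻¹` on rows. -/
def qq (l : ℕ) (e : ℤˣ) (p : ZMod l × ZMod l) : ZMod l × ZMod l :=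
  (-((e : ℤ) : ZMod l) * p.2, ((e : ℤ) : ZMod l) * p.1 + p.2)

/-- Action of `dlt e` on rows. -/
def rr (l : ℕ) (e : ℤˣ) (p : ZMod l × ZMod l) : ZMod l × ZMod l :=
  (p.1 + ((e : ℤ) : ZMod l) * p.2, -((e : ℤ) : ZMod l) * p.1)

lemma brow_mul (γ : SL(2, ℤ)) (e : ℤˣ) : brow l (γ * (dlt e)⁻¹) = qq l e (brow l γ) := by
  have h : ((dlt e)⁻¹ : SL(2, ℤ)).val = !![0, (e : ℤ); -(e : ℤ), 1] := by
    rcases Int.units_eq_one_or e with rfl | rfl <;> decide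
  simp only [brow, qq, Matrix.SpecialLinearGroup.coe_mul, h, Matrix.mul_apply, Fin.sum_univ_two]
  simp
  constructor <;> ring

lemma e_sq (e : ℤˣ) : ((e : ℤ) : ZMod l) * ((e : ℤ) : ZMod l) = 1 := by
  rcases Int.units_eq_one_or e with rfl | rfl <;> simp

lemma copr_of {u v a b : ZMod l} [NeZero l] (h : a * u + b * v = 1) : MW.copr l u v := by
  unfold MW.copr
  set d := Nat.gcd (Nat.gcd u.val v.val) l with hd
  have hdl : d ∣ l := Nat.gcd_dvd_right _ _
  have hdu : d ∣ u.val := (Nat.gcd_dvd_left _ _).trans (Nat.gcd_dvd_left _ _)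
  have hdv : d ∣ v.val := (Nat.gcd_dvd_left _ _).trans (Nat.gcd_dvd_right _ _)
  have z : ∀ w : ZMod l, d ∣ w.val → ZMod.castHom hdl (ZMod d) w = 0 := by
    intro w hw
    rw [← ZMod.natCast_zmod_val w, map_natCast]
    exact (ZMod.natCast_eq_zero_iff _ _).2 hw
  have := congrArg (ZMod.castHom hdl (ZMod d)) h
  rw [map_add, map_mul, map_mul, z u hdu, z v hdv, map_one, mul_zero, mul_zero, add_zero] at this
  have h1 : ((1 : ℕ) : ZMod d) = 0 := by simpa using this.symm
  exact Nat.dvd_one.1 ((ZMod.natCast_eq_zero_iff _ _).1 h1)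

lemma exists_of_brow {γ : SL(2, ℤ)} {p : ZMod l × ZMod l} (h : brow l γ = p) :
    ∃ a b : ZMod l, a * p.1 + b * p.2 = 1 := by
  subst h
  have d := γ.det_coe
  rw [Matrix.det_fin_two] at d
  have D : ((γ 0 0 : ℤ) : ZMod l) * (γ 1 1 : ℤ) - (γ 0 1 : ℤ) * (γ 1 0 : ℤ) = 1 := by
    exact_mod_cast congrArg (Int.cast : ℤ → ZMod l) d
  refine ⟨-(γ 0 1 : ℤ), (γ 0 0 : ℤ), ?_⟩
  simp only [brow]
  linear_combination D

lemma sum_shift [NeZero l] {γfun : ZMod l × ZMod l → SL(2, ℤ)}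
    (hγ : ∀ p : ZMod l × ZMod l, MW.copr l p.1 p.2 → brow l (γfun p) = p) (e : ℤˣ)
    {X : SL(2, ℤ) → ℂ} (hX : ∀ γ γ', brow l γ = brow l γ' → X γ = X γ') :
    ∑ p ∈ Finset.univ.filter (fun p : ZMod l × ZMod l => MW.copr l p.1 p.2),
      X (γfun p * (dlt e)⁻¹) =
    ∑ p ∈ Finset.univ.filter (fun p : ZMod l × ZMod l => MW.copr l p.1 p.2), X (γfun p) := by
  have he := e_sq (l := l) e
  have hq : ∀ p : ZMod l × ZMod l, MW.copr l p.1 p.2 → MW.copr l (qq l e p).1 (qq l e p).2 := by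
    intro p hp
    obtain ⟨a, b, h⟩ := exists_of_brow (hγ p hp)
    refine copr_of (a := a - ((e : ℤ) : ZMod l) * b) (b := ((e : ℤ) : ZMod l) * a) ?_
    simp only [qq]
    linear_combination h + (p.2 * b + p.1 * a) * he
  have hr : ∀ p : ZMod l × ZMod l, MW.copr l p.1 p.2 → MW.copr l (rr l e p).1 (rr l e p).2 := by
    intro p hp
    obtain ⟨a, b, h⟩ := exists_of_brow (hγ p hp)
    refine copr_of (a := ((e : ℤ) : ZMod l) * b) (b := b - ((e : ℤ) : ZMod l) * a) ?_
    simp only [rr]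
    linear_combination h + (p.2 * b + p.1 * a) * he
  refine Finset.sum_nbij' (qq l e) (rr l e) ?_ ?_ ?_ ?_ ?_
  · intro p hp
    simpa using hq p (by simpa using hp)
  · intro p hp
    simpa using hr p (by simpa using hp)
  · intro p _
    ext
    · simp only [qq, rr]; linear_combination p.1 * he
    · simp only [qq, rr]; linear_combination p.2 * he
  · intro p _
    ext
    · simp only [qq, rr]; linear_combination p.1 * he
    · simp only [qq, rr]; linear_combination p.2 * he
  · intro p hp
    have hp : MW.copr l p.1 p.2 := by simpa using hp
    apply hX
    rw [brow_mul, hγ p hp, hγ _ (hq p hp)]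

lemma sum_emm [NeZero l] (f g : CuspForm (CongruenceSubgroup.Gamma1 l) 4)
    {γfun : ZMod l × ZMod l → SL(2, ℤ)}
    (hγ : ∀ p : ZMod l × ZMod l, MW.copr l p.1 p.2 → brow l (γfun p) = p) (e : ℤˣ) :
    ∑ p ∈ Finset.univ.filter (fun p : ZMod l × ZMod l => MW.copr l p.1 p.2),
      emm ((e : ℤ) : ℝ) (FF f (γfun p)) (FF g (γfun p * (dlt e)⁻¹)) =
    - (3 * ∑ p ∈ Finset.univ.filter (fun p : ZMod l × ZMod l => MW.copr l p.1 p.2),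
        bb (FF f (γfun p)) (FF g (γfun p)) +
      2 * ∑ p ∈ Finset.univ.filter (fun p : ZMod l × ZMod l => MW.copr l p.1 p.2),
        ell (FF f (γfun p)) (FF g (γfun p))) := by
  have key := Finset.sum_congr (rfl : Finset.univ.filter
    (fun p : ZMod l × ZMod l => MW.copr l p.1 p.2) = _) (fun p _ => forms_sl f g (γfun p) e)
  simp only [Finset.sum_add_distrib, Finset.sum_const_zero] at key
  have X1 := sum_shift hγ e (X := fun γ => bb (FF f γ) (FF g γ))
    (fun γ γ' h => by simp only [FF_coset f h, FF_coset g h])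
  have X2 := sum_shift hγ e (X := fun γ => bb (FF f (γ * (dlt e)⁻¹)) (FF g (γ * (dlt e)⁻¹)))
    (fun γ γ' h => by
      have h' : brow l (γ * (dlt e)⁻¹) = brow l (γ' * (dlt e)⁻¹) := by
        rw [brow_mul, brow_mul, h]
      simp only [FF_coset f h', FF_coset g h'])
  have X3 := sum_shift hγ e (X := fun γ => ell (FF f γ) (FF g γ))
    (fun γ γ' h => by simp only [FF_coset f h, FF_coset g h])
  rw [X2, X1, X3] at key
  linear_combination key

end Modular

end MWaux

open MW in
theorem stmt7 (l : ℕ) (hl : 3 ≤ l) [NeZero l]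
    (f g : CuspForm (CongruenceSubgroup.Gamma1 l) 4)
    (γfun : ZMod l × ZMod l → SL(2, ℤ))
    (hγ : ∀ p : ZMod l × ZMod l, copr l p.1 p.2 →
      (((γfun p : Matrix (Fin 2) (Fin 2) ℤ) 1 0 : ZMod l) = p.1 ∧
        ((γfun p : Matrix (Fin 2) (Fin 2) ℤ) 1 1 : ZMod l) = p.2)) :
    0 = ∑ p ∈ Finset.univ.filter (fun p : ZMod l × ZMod l => copr l p.1 p.2),
          petTerm l (⇑f) (⇑g) γfun false p := by
  have hγ' : ∀ p : ZMod l × ZMod l, copr l p.1 p.2 → MWaux.brow l (γfun p) = p :=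
    fun p hp => Prod.ext (hγ p hp).1 (hγ p hp).2
  have E1 := MWaux.sum_emm f g hγ' 1
  have E2 := MWaux.sum_emm f g hγ' (-1)
  rw [← E2, ← sub_eq_zero, ← Finset.sum_sub_distrib] at E1
  rw [← E1]
  refine Finset.sum_congr rfl fun p hp => ?_
  have hp : copr l p.1 p.2 := by simpa using hp
  obtain ⟨a, b, h⟩ := MWaux.exists_of_brow (hγ' p hp)
  have c1 : copr l (-p.2) (p.1 + p.2) :=
    MWaux.copr_of (a := a - b) (b := a) (by linear_combination h)
  have c2 : copr l p.2 (p.2 - p.1) :=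
    MWaux.copr_of (a := a + b) (b := -a) (by linear_combination h)
  have b1 : MWaux.brow l (γfun p * (MWaux.dlt 1)⁻¹) = MWaux.brow l (γfun (-p.2, p.1 + p.2)) := by
    rw [MWaux.brow_mul, hγ' p hp, hγ' _ c1]
    simp [MWaux.qq]
  have b2 : MWaux.brow l (γfun p * (MWaux.dlt (-1))⁻¹) = MWaux.brow l (γfun (p.2, p.2 - p.1)) := by
    rw [MWaux.brow_mul, hγ' p hp, hγ' _ c2]
    simp [MWaux.qq]
    ring
  rw [MWaux.FF_coset g b1, MWaux.FF_coset g b2]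
  simp only [petTerm, pair, MWaux.pInt_eq, MWaux.emm, Prod.mk.eta]
  simp
  ring
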